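/- Let p ≠ l be prime numbers, R a henselian valuation ring which is an 𝔽_p-algebra, and A an R-algebra which is free of finite rank d ≥ 1 as an R-module with l ∤ d. Then there exist R-algebras A' and A'' such that: (i) A' is free as an R-module of finite rank prime to l, and Frac(R) ⊗_R A' is an étale Frac(R)-algebra; (ii) there is an R-algebra homomorphism A' → A'' which is a uh-morphism, i.e. integral, bijective on prime spectra, with all residue field extensions purely inseparable; (iii) A'' is free as an R-module of finite rank prime to l; and (iv) there is an R-algebra homomorphism A → A''. -/

import Mathlib

set_option synthInstance.maxHeartbeats 1000000

/-!
STATEMENT 10: Over a henselian valuation ring `R` of characteristic `p`, every finite free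
`R`-algebra of rank prime to `l` is corefinable by a generically étale finite free
`R`-algebra of rank prime to `l` followed by a uh-morphism.
-/

open scoped TensorProduct

open IsLocalRing in
/-- The induced map on residue fields at a prime `q ⊆ B` and its preimage `φ⁻¹(q) ⊆ A`. -/
noncomputable def residueFieldHom {A B : Type*} [CommRing A] [CommRing B] (φ : A →+* B)
    (q : Ideal B) [q.IsPrime] :
    ResidueField (Localization.AtPrime (q.comap φ)) →+* ResidueField (Localization.AtPrime q) :=
  letI := Localization.isLocalHom_localRingHom (q.comap φ) q φ rfl
  ResidueField.map (Localization.localRingHom (q.comap φ) q φ rfl)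

/-- `φ` induces purely inseparable residue field extensions at every prime. -/
def RingHom.PurelyInseparableResidues {A B : Type*} [CommRing A] [CommRing B] (φ : A →+* B) : Prop :=
  ∀ (q : Ideal B) (_ : q.IsPrime),
    letI := ‹q.IsPrime›
    letI := (residueFieldHom φ q).toAlgebra
    IsPurelyInseparable (IsLocalRing.ResidueField (Localization.AtPrime (q.comap φ)))
      (IsLocalRing.ResidueField (Localization.AtPrime q))

/-- `Spec(B) → Spec(A)` is a universal homeomorphism: integral, bijective on prime spectra,
purely inseparable residue field extensions. -/
def RingHom.IsUhMorphism {A B : Type*} [CommRing A] [CommRing B] (φ : A →+* B) : Prop :=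
  φ.IsIntegral ∧ Function.Bijective (PrimeSpectrum.comap φ) ∧ φ.PurelyInseparableResidues

/-- A packaged `R`-algebra. -/
structure AlgebraPkg (R : Type) [CommRing R] : Type 1 where
  carrier : Type
  [commRing : CommRing carrier]
  [algebra : Algebra R carrier]

attribute [instance] AlgebraPkg.commRing AlgebraPkg.algebra

/-!
Let `K = Frac R`, and let `p` be the exponential characteristic of `R`. The dimension of the
Artinian ring `K ⊗ A` is the sum, with multiplicities, of the degrees of its residue fields, so one
of these degrees is not divisible by `l`; that field is the fraction field `L` of a quotient `B` of
`A` by a prime over `0 ⊆ R`. The subalgebra `R[B ^ (p ^ n)]` of `B` lies in the separable closure of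
`K` in `L` once `n` is large, hence is generically étale. Its inclusion into `B` is a universal
homeomorphism because it contains all `p ^ n`-th powers, and its rank divides that of `B` by the
tower law. Both algebras are free over `R` because finite torsion-free modules over a valuation ring
are free.
-/

open scoped nonZeroDivisors

section FinrankMod

variable {K B : Type*} [Field K] [CommRing B] [Algebra K B] {l : ℕ}

lemma dvd_finrank_of_forall_isMaximal
    (hB : ∀ m : Ideal B, m.IsMaximal → l ∣ Module.finrank K (B ⧸ m))
    (N : Type*) [AddCommGroup N] [Module B N] [Module K N] [IsScalarTower K B N]
    [Module.Finite K N] : l ∣ Module.finrank K N := by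
  induction hn : Module.finrank K N using Nat.strong_induction_on generalizing N with
  | _ n ih =>
  subst hn
  cases subsingleton_or_nontrivial N with
  | inl _ => simp [Module.finrank_zero_of_subsingleton]
  | inr _ =>
    have : IsArtinian B N := isArtinian_of_tower K inferInstance
    obtain ⟨P, hP⟩ := IsAtomic.exists_atom (Submodule B N)
    have : IsSimpleModule B P := isSimpleModule_iff_isAtom.mpr hP
    have : Nontrivial P := IsSimpleModule.nontrivial B P
    have : Module.Finite K P := inferInstanceAs (Module.Finite K (P.restrictScalars K))
    obtain ⟨m, hm, ⟨e⟩⟩ := isSimpleModule_iff_quot_maximal.mp ‹IsSimpleModule B P›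
    have hPm : Module.finrank K P = Module.finrank K (B ⧸ m) :=
      (e.restrictScalars K).finrank_eq
    have hadd : Module.finrank K (N ⧸ P) + Module.finrank K P = Module.finrank K N := by
      rw [← (P.restrictScalars K).finrank_quotient_add_finrank,
        (Submodule.Quotient.restrictScalarsEquiv K P).finrank_eq]
      rfl
    have hpos : 0 < Module.finrank K P := Module.finrank_pos
    have : Module.Finite K (N ⧸ P) :=
      .of_surjective (P.mkQ.restrictScalars K) P.mkQ_surjective
    rw [← hadd]
    exact dvd_add (ih _ (by omega) (N ⧸ P) rfl) (hPm ▸ hB m hm)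

lemma exists_isMaximal_not_dvd_finrank_quotient (h : ¬ l ∣ Module.finrank K B) :
    ∃ m : Ideal B, m.IsMaximal ∧ ¬ l ∣ Module.finrank K (B ⧸ m) := by
  by_contra! hB
  have : Module.Finite K B :=
    Module.finite_of_finrank_pos (Nat.pos_of_ne_zero fun h0 ↦ h (h0 ▸ dvd_zero l))
  exact h (dvd_finrank_of_forall_isMaximal hB B)

end FinrankMod

lemma finrank_tensorProduct_of_isFractionRing (R K M : Type*) [CommRing R] [CommRing K]
    [Algebra R K] [IsFractionRing R K] [AddCommGroup M] [Module R M] :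
    Module.finrank K (K ⊗[R] M) = Module.finrank R M := by
  rw [IsFractionRing.finrank_right_eq R K,
    IsLocalizedModule.finrank_eq R⁰ (TensorProduct.mk R K M 1) le_rfl]

lemma exists_isPrime_not_dvd_finrank_quotient {R A : Type*} [CommRing R] [IsDomain R] [CommRing A]
    [Algebra R A] {l : ℕ} (h : ¬ l ∣ Module.finrank R A) :
    ∃ P : Ideal A, P.IsPrime ∧ FaithfulSMul R (A ⧸ P) ∧ ¬ l ∣ Module.finrank R (A ⧸ P) := by
  let K := FractionRing R
  rw [← finrank_tensorProduct_of_isFractionRing R K] at h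
  obtain ⟨m, hm, hlm⟩ := exists_isMaximal_not_dvd_finrank_quotient h
  let P : Ideal A := m.comap Algebra.TensorProduct.includeRight
  let L := (K ⊗[R] A) ⧸ m
  let : Field L := Ideal.Quotient.field m
  let f : A ⧸ P →ₐ[R] L := Ideal.quotientMapₐ m Algebra.TensorProduct.includeRight le_rfl
  have hf : Function.Injective f := Ideal.quotientMap_injective
  algebraize [f.toRingHom]
  have : IsScalarTower R (A ⧸ P) L := .of_algebraMap_eq fun r ↦ (f.commutes r).symm
  have : FaithfulSMul (A ⧸ P) L := (faithfulSMul_iff_algebraMap_injective _ _).mpr hf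
  have : FaithfulSMul R L := .trans R K L
  have : IsFractionRing (A ⧸ P) L := .of_field _ _ fun z ↦ by
    obtain ⟨z, rfl⟩ := Ideal.Quotient.mk_surjective z
    obtain ⟨⟨a, r⟩, hr⟩ := IsLocalizedModule.surj R⁰ (TensorProduct.mk R K A 1) z
    have hra : algebraMap R L r * Ideal.Quotient.mk m z = f (Ideal.Quotient.mk P a) := by
      rw [← Algebra.smul_def]
      exact congrArg (Ideal.Quotient.mkₐ R m) hr
    have hr0 : algebraMap R L r ≠ 0 := by
      simp
    refine ⟨Ideal.Quotient.mk P a, algebraMap R (A ⧸ P) r, ?_⟩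
    rw [← IsScalarTower.algebraMap_apply, eq_div_iff hr0, mul_comm]
    exact hra
  refine ⟨P, inferInstance, .tower_bot R (A ⧸ P) L, ?_⟩
  rwa [IsFractionRing.finrank_left_eq R (A ⧸ P) L, ← IsFractionRing.finrank_right_eq R K L]

section UniversalHomeomorphism

variable {A B : Type*} [CommRing A] [CommRing B]

lemma residueFieldHom_algebraMap (φ : A →+* B) (q : Ideal B) [q.IsPrime] (a : A) :
    residueFieldHom φ q (algebraMap A (q.comap φ).ResidueField a) =
      algebraMap B q.ResidueField (φ a) :=
  Ideal.ResidueField.map_algebraMap (q.comap φ) q φ rfl a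

-- A ring of characteristic zero has `p = 1` and may still have residue fields of positive
-- characteristic, so `q = p` fails in general.
lemma exists_expChar_pow_eq {A k : Type*} [Ring A] [Field k] (φ : A →+* k) (p n : ℕ)
    [ExpChar A p] : ∃ q m, ExpChar k q ∧ q ^ m = p ^ n := by
  cases ‹ExpChar A p› with
  | zero =>
    obtain ⟨q, hq⟩ := ExpChar.exists k
    exact ⟨q, 0, hq, by simp⟩
  | prime hp =>
    have : CharP k p := (CharP.charP_iff_prime_eq_zero hp).mpr <| by
      rw [← map_natCast φ, CharP.cast_eq_zero, map_zero]
    exact ⟨p, n, .prime hp, rfl⟩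

variable {φ : A →+* B} {p n : ℕ} [ExpChar A p] (hpow : ∀ b, b ^ p ^ n ∈ φ.range)
include hpow

lemma purelyInseparableResidues_of_pow_mem_range : φ.PurelyInseparableResidues := by
  intro q hq
  let := (residueFieldHom φ q).toAlgebra
  obtain ⟨c, m, _, hcm⟩ := exists_expChar_pow_eq (algebraMap A (q.comap φ).ResidueField) p n
  refine (isPurelyInseparable_iff_pow_mem _ c).mpr fun x ↦ ⟨m, ?_⟩
  obtain ⟨b, s, -, rfl⟩ := IsFractionRing.div_surjective (A := B ⧸ q) x
  obtain ⟨b, rfl⟩ := Ideal.Quotient.mk_surjective b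
  obtain ⟨s, rfl⟩ := Ideal.Quotient.mk_surjective s
  obtain ⟨a, ha⟩ := hpow b
  obtain ⟨t, ht⟩ := hpow s
  refine ⟨algebraMap A (q.comap φ).ResidueField a / algebraMap A (q.comap φ).ResidueField t, ?_⟩
  change residueFieldHom φ q _ = _
  rw [map_div₀, residueFieldHom_algebraMap, residueFieldHom_algebraMap, ha, ht, hcm]
  simp [div_pow]

lemma isUhMorphism_of_pow_mem_range (hφ : Function.Injective φ) : φ.IsUhMorphism := by
  have hpos : 0 < p ^ n := expChar_pow_pos A p n
  refine ⟨fun b ↦ ?_, ?_, purelyInseparableResidues_of_pow_mem_range hpow⟩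
  · algebraize [φ]
    obtain ⟨a, ha⟩ := hpow b
    have hb : IsIntegral A (b ^ p ^ n) := ha ▸ isIntegral_algebraMap
    exact hb.of_pow hpos
  · refine (PrimeSpectrum.isHomeomorph_comap φ (fun b ↦ ⟨p ^ n, hpos, hpow b⟩) ?_).bijective
    rw [(RingHom.injective_iff_ker_eq_bot φ).mp hφ]
    exact bot_le

end UniversalHomeomorphism

section Etale

variable {R K L S E : Type*} [CommRing R] [Field K] [Algebra R K] [Field L] [Algebra K L]
  [Algebra.IsSeparable K L]

lemma etale_of_injective_of_isSeparable [CommRing E] [Algebra K E] [Module.Finite K E]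
    (f : E →ₐ[K] L) (hf : Function.Injective f) : Algebra.Etale K E := by
  have : IsDomain E := hf.isDomain f.toRingHom
  let : Field E := (isField_of_isIntegral_of_isField' (Field.toIsField K)).toField
  have : Algebra.IsSeparable K E := .of_algHom K L f
  have : Algebra.FormallyEtale K E := .of_isSeparable K E
  exact ⟨inferInstance, Algebra.FinitePresentation.of_finiteType.mp inferInstance⟩

lemma etale_tensorProduct_of_injective_of_isSeparable [IsFractionRing R K] [Algebra R L]
    [IsScalarTower R K L] [CommRing S] [Algebra R S] [Module.Finite R S]
    (f : S →ₐ[R] L) (hf : Function.Injective f) : Algebra.Etale K (K ⊗[R] S) := by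
  have : Module.Flat R K := IsLocalization.flat K R⁰
  let g : K ⊗[R] S →ₐ[K] K ⊗[R] L := Algebra.TensorProduct.map (.id K K) f
  have hg : Function.Injective g :=
    Module.Flat.lTensor_preserves_injective_linearMap f.toLinearMap hf
  let e : K ⊗[R] L ≃ₐ[K] L := IsLocalization.algebraLid R⁰ K L
  exact etale_of_injective_of_isSeparable (e.toAlgHom.comp g) (e.injective.comp hg)

end Etale

/-- The `R`-subalgebra `R[B ^ (p ^ n)]` of `B` generated by the `p ^ n`-th powers of the elements
of `B`, where `p` is the exponential characteristic. -/
def frobeniusSubalgebra (R B : Type*) [CommRing R] [CommRing B] [Algebra R B] (p n : ℕ)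
    [ExpChar B p] : Subalgebra R B :=
  Algebra.adjoin R (iterateFrobenius B p n).range

section FrobeniusSubalgebra

variable {R B : Type*} [CommRing R] [CommRing B] [Algebra R B] {p : ℕ} [ExpChar B p]

lemma pow_mem_frobeniusSubalgebra (n : ℕ) (b : B) : b ^ p ^ n ∈ frobeniusSubalgebra R B p n :=
  Algebra.subset_adjoin ⟨b, rfl⟩

lemma frobeniusSubalgebra_le_iff {n : ℕ} {T : Subalgebra R B} :
    frobeniusSubalgebra R B p n ≤ T ↔ ∀ b, b ^ p ^ n ∈ T := by
  rw [frobeniusSubalgebra, Algebra.adjoin_le_iff]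
  exact Set.range_subset_iff

lemma toSubmodule_frobeniusSubalgebra (n : ℕ) :
    (frobeniusSubalgebra R B p n).toSubmodule =
      Submodule.span R (Set.range (iterateFrobenius B p n)) := by
  have hclosure : Submonoid.closure (Set.range (iterateFrobenius B p n)) =
      (iterateFrobenius B p n).range.toSubmonoid :=
    Submonoid.closure_eq (iterateFrobenius B p n).range.toSubmonoid
  rw [frobeniusSubalgebra, RingHom.coe_range, Algebra.adjoin_eq_span, hclosure]
  rfl

instance finite_frobeniusSubalgebra [ExpChar R p] [Module.Finite R B] (n : ℕ) :
    Module.Finite R (frobeniusSubalgebra R B p n) := by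
  obtain ⟨t, ht⟩ := Module.Finite.fg_top (R := R) (M := B)
  have htop : ⊤ ≤ (Submodule.span R (iterateFrobenius B p n '' t)).comap
      (LinearMap.iterateFrobenius R B p n) := by
    rw [← ht, Submodule.span_le]
    exact fun x hx ↦ Submodule.subset_span ⟨x, hx, rfl⟩
  have hspan : Submodule.span R (Set.range (iterateFrobenius B p n)) =
      Submodule.span R (iterateFrobenius B p n '' t) :=
    le_antisymm
      (Submodule.span_le.mpr <| Set.range_subset_iff.mpr fun b ↦ htop (Submodule.mem_top (x := b)))
      (Submodule.span_mono (Set.image_subset_range _ _))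
  have hfg : (frobeniusSubalgebra R B p n).toSubmodule.FG := by
    rw [toSubmodule_frobeniusSubalgebra, hspan]
    exact Submodule.fg_span (t.finite_toSet.image _)
  exact Module.Finite.iff_fg.mpr hfg

lemma isUhMorphism_subtype_frobeniusSubalgebra (n : ℕ) :
    RingHom.IsUhMorphism
      ((frobeniusSubalgebra R B p n).val : frobeniusSubalgebra R B p n →+* B) := by
  have : ExpChar (frobeniusSubalgebra R B p n) p :=
    (frobeniusSubalgebra R B p n).val.toRingHom.expChar Subtype.val_injective p
  exact isUhMorphism_of_pow_mem_range (p := p) (n := n)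
    (fun b ↦ ⟨⟨_, pow_mem_frobeniusSubalgebra n b⟩, rfl⟩) Subtype.val_injective

end FrobeniusSubalgebra

lemma exists_etale_tensorProduct_frobeniusSubalgebra (R B K L : Type*) [CommRing R]
    [CommRing B] [Algebra R B] [Module.Finite R B] [Field K] [Algebra R K] [IsFractionRing R K]
    [Field L] [Algebra K L] [Module.Finite K L] [Algebra B L] [FaithfulSMul B L] [Algebra R L]
    [IsScalarTower R K L] [IsScalarTower R B L] (p : ℕ) [ExpChar R p] [ExpChar B p] :
    ∃ n, Algebra.Etale K (K ⊗[R] frobeniusSubalgebra R B p n) := by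
  have : ExpChar K p := expChar_of_injective_algebraMap (IsFractionRing.injective R K) p
  let E := separableClosure K L
  have : ExpChar E p := expChar_of_injective_algebraMap (algebraMap K E).injective p
  obtain ⟨n, hn⟩ := (IsPurelyInseparable.hasExponent_iff' E L p).mp inferInstance
  let T : Subalgebra R B :=
    (E.toSubalgebra.restrictScalars R).comap (IsScalarTower.toAlgHom R B L)
  have hT : frobeniusSubalgebra R B p n ≤ T := frobeniusSubalgebra_le_iff.mpr fun b ↦ by
    obtain ⟨y, hy⟩ := hn (algebraMap B L b)
    change algebraMap B L (b ^ p ^ n) ∈ E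
    rw [map_pow, ← hy]
    exact y.2
  let f : frobeniusSubalgebra R B p n →ₐ[R] E :=
    ((IsScalarTower.toAlgHom R B L).comp (Subalgebra.val _)).codRestrict
      (E.toSubalgebra.restrictScalars R) fun x ↦ hT x.2
  have hf : Function.Injective f := fun x y h ↦
    Subtype.ext (FaithfulSMul.algebraMap_injective B L (congrArg Subtype.val h))
  exact ⟨n, etale_tensorProduct_of_injective_of_isSeparable f hf⟩

lemma free_of_isTorsionFree_of_valuationRing (R M : Type*) [CommRing R] [IsDomain R]
    [ValuationRing R] [AddCommGroup M] [Module R M] [Module.Finite R M] [Module.IsTorsionFree R M] :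
    Module.Free R M := by
  have : Module.Flat R M := by
    rwa [Module.Flat.flat_iff_torsion_eq_bot_of_isBezout,
      ← Submodule.isTorsionFree_iff_torsion_eq_bot]
  exact Module.free_of_flat_of_isLocalRing

theorem fpsl'_algebra_corefinable_by_generically_etale_and_uh_general {R A : Type*} [CommRing R]
    [IsDomain R] [ValuationRing R] [CommRing A] [Algebra R A] [Module.Finite R A] {l : ℕ}
    (hl : ¬ l ∣ Module.finrank R A) :
    ∃ (P : Ideal A) (S : Subalgebra R (A ⧸ P)),
      (Module.Free R S ∧ Module.Finite R S ∧ ¬ l ∣ Module.finrank R S ∧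
        Algebra.Etale (FractionRing R) (FractionRing R ⊗[R] S)) ∧
      RingHom.IsUhMorphism (S.val : S →+* A ⧸ P) ∧
      Module.Free R (A ⧸ P) ∧ ¬ l ∣ Module.finrank R (A ⧸ P) := by
  obtain ⟨P, hP, _, hlP⟩ := exists_isPrime_not_dvd_finrank_quotient hl
  let K := FractionRing R
  let L := FractionRing (A ⧸ P)
  let : Algebra K L := FractionRing.liftAlgebra R L
  have : Module.Finite K L := .of_isLocalization R (A ⧸ P) R⁰
  obtain ⟨p, _⟩ := ExpChar.exists R
  have : ExpChar (A ⧸ P) p :=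
    expChar_of_injective_algebraMap (FaithfulSMul.algebraMap_injective R (A ⧸ P)) p
  obtain ⟨n, hn⟩ := exists_etale_tensorProduct_frobeniusSubalgebra R (A ⧸ P) K L p
  let S := frobeniusSubalgebra R (A ⧸ P) p n
  have hS : Module.finrank R S ∣ Module.finrank R (A ⧸ P) :=
    ⟨_, (Module.finrank_mul_finrank' (R := R) (S := S) (A ⧸ P)).symm⟩
  exact ⟨P, S, ⟨free_of_isTorsionFree_of_valuationRing R S, inferInstance,
    fun h ↦ hlP (h.trans hS), hn⟩, isUhMorphism_subtype_frobeniusSubalgebra n,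
    free_of_isTorsionFree_of_valuationRing R (A ⧸ P), hlP⟩

theorem fpsl'_algebra_corefinable_by_generically_etale_and_uh
    (p l : ℕ) (hp : p.Prime) (hl : l.Prime) (hpl : p ≠ l)
    {R : Type} [CommRing R] [IsDomain R] [ValuationRing R] [HenselianLocalRing R]
    [Algebra (ZMod p) R]
    {A : Type} [CommRing A] [Algebra R A] [Module.Free R A]
    (d : ℕ) (hd : Module.finrank R A = d) (hd1 : 1 ≤ d) (hld : ¬ l ∣ d) :
    ∃ A' A'' : AlgebraPkg R,
      (Module.Free R A'.carrier ∧ Module.Finite R A'.carrier ∧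
        ¬ l ∣ Module.finrank R A'.carrier ∧
        Algebra.Etale (FractionRing R) ((FractionRing R) ⊗[R] A'.carrier)) ∧
      (∃ g : A'.carrier →ₐ[R] A''.carrier,
        RingHom.IsUhMorphism (g : A'.carrier →+* A''.carrier)) ∧
      (Module.Free R A''.carrier ∧ Module.Finite R A''.carrier ∧
        ¬ l ∣ Module.finrank R A''.carrier) ∧
      Nonempty (A →ₐ[R] A''.carrier) := by
  have : Module.Finite R A := Module.finite_of_finrank_pos (hd ▸ hd1)
  obtain ⟨P, S, hS, huh, hfree, hlP⟩ :=
    fpsl'_algebra_corefinable_by_generically_etale_and_uh_general (hd ▸ hld)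
  exact ⟨⟨S⟩, ⟨A ⧸ P⟩, hS, ⟨S.val, huh⟩, ⟨hfree, inferInstance, hlP⟩, ⟨Ideal.Quotient.mkₐ R P⟩⟩
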